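/- For every natural number N ≥ 6 and every index i ∈ {1,…,6}, the i-th diagonal entry of T_N(0) exceeds the sum of the absolute values of the off-diagonal entries in its row by more than f(N): T_N(0)_{ii} − ∑_{j≠i} |T_N(0)_{ij}| > f(N), where f(N) = 1 − (2^{1−N} + (2/3)^N·(2+√3) + (1/3)^N·(12+6√3)). -/

import Mathlib

open Matrix

noncomputable section

/-- `a = 2^{-N}` -/
def a (N : ℕ) : ℝ := (2 : ℝ)⁻¹ ^ N

/-- `b = (-2)^{-N}` -/
def b (N : ℕ) : ℝ := (-2 : ℝ)⁻¹ ^ N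

/-- `c = (2/3)^N` -/
def c (N : ℕ) : ℝ := (2 / 3 : ℝ) ^ N

def M1 (N : ℕ) : Matrix (Fin 3) (Fin 3) ℝ :=
  !![1, a N, a N; a N, 1, b N; a N, b N, 1]

def δ1 (N : ℕ) : Matrix (Fin 3) (Fin 3) ℝ :=
  !![0, a N, a N; a N, (a N) ^ 2, (a N) ^ 2; a N, (a N) ^ 2, (a N) ^ 2]

def δ2 (N : ℕ) : Matrix (Fin 3) (Fin 3) ℝ :=
  !![(a N) ^ 2, a N, a N * b N; a N, 0, b N; a N * b N, b N, (b N) ^ 2]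

def δ3 (N : ℕ) : Matrix (Fin 3) (Fin 3) ℝ :=
  !![(a N) ^ 2, a N * b N, a N; a N * b N, (b N) ^ 2, b N; a N, b N, 0]

def Mx (N : ℕ) : Matrix (Fin 3) (Fin 3) ℝ :=
  (Real.sqrt 3 * c N) • (!![0, 0, 0; 0, -1, 0; 0, 0, 1] + δ3 N - δ2 N)

def Mz (N : ℕ) : Matrix (Fin 3) (Fin 3) ℝ :=
  c N • (!![-2, 0, 0; 0, 1, 0; 0, 0, 1] - (2 : ℝ) • δ1 N + δ2 N + δ3 N)

def S (x : Fin 3 → ℝ) : Matrix (Fin 3) (Fin 3) ℝ :=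
  !![0, x 0, x 1; -x 0, 0, x 2; -x 1, -x 2, 0]

/-- The 6×6 Choi-matrix representation `T_N(x)` in 2×2 block form. -/
def T (N : ℕ) (x : Fin 3 → ℝ) : Matrix (Fin 3 ⊕ Fin 3) (Fin 3 ⊕ Fin 3) ℝ :=
  Matrix.fromBlocks (M1 N + Mz N) (Mx N + S x) (Mx N - S x) (M1 N - Mz N)

end

noncomputable def f (N : ℕ) : ℝ :=
  1 - ((2 : ℝ) ^ ((1 : ℤ) - (N : ℤ)) + (2 / 3 : ℝ) ^ N * (2 + Real.sqrt 3)
      + (1 / 3 : ℝ) ^ N * (12 + 6 * Real.sqrt 3))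

/-!
Since `|b| = a`, every row of `M₁`, and hence of `M₁ ⊕ M₁`, has Gershgorin margin exactly `1 - 2a`.
Adding a matrix lowers the margin of a row by at most the absolute sum of that row in the added
matrix, so the blocks `±M_z` and `M_x` together cost at most `c (2 + 6a) + √3 c (1 + 4a)`, which is
less than what `f(N)` allows for.
-/

section GershgorinMargin

variable {R m n : Type*} [AddCommGroup R] [LinearOrder R]
  [Fintype m] [DecidableEq m] [Fintype n] [DecidableEq n]

/-- The signed Gershgorin margin of row `i`: the diagonal entry minus the radius of the `i`-th
Gershgorin disc. Strict diagonal dominance with positive diagonal says that it is positive. -/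
def gershgorinMargin (A : Matrix n n R) (i : n) : R :=
  A i i - ∑ j ∈ Finset.univ.erase i, |A i j|

theorem gershgorinMargin_eq_add_sub_sum (A : Matrix n n R) (i : n) :
    gershgorinMargin A i = A i i + |A i i| - ∑ j, |A i j| := by
  rw [gershgorinMargin, Finset.sum_erase_eq_sub (Finset.mem_univ i)]
  abel

theorem gershgorinMargin_fromBlocks_inl (A : Matrix m m R) (B : Matrix m n R) (C : Matrix n m R)
    (D : Matrix n n R) (i : m) :
    gershgorinMargin (fromBlocks A B C D) (.inl i) = gershgorinMargin A i - ∑ j, |B i j| := by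
  simp only [gershgorinMargin_eq_add_sub_sum, Fintype.sum_sum_type, fromBlocks_apply₁₁,
    fromBlocks_apply₁₂, sub_sub]

theorem gershgorinMargin_fromBlocks_inr (A : Matrix m m R) (B : Matrix m n R) (C : Matrix n m R)
    (D : Matrix n n R) (i : n) :
    gershgorinMargin (fromBlocks A B C D) (.inr i) = gershgorinMargin D i - ∑ j, |C i j| := by
  simp only [gershgorinMargin_eq_add_sub_sum, Fintype.sum_sum_type, fromBlocks_apply₂₁,
    fromBlocks_apply₂₂, sub_sub, add_comm]

variable [IsOrderedAddMonoid R]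

theorem gershgorinMargin_sub_sum_abs_le_add (A B : Matrix n n R) (i : n) :
    gershgorinMargin A i - ∑ j, |B i j| ≤ gershgorinMargin (A + B) i := by
  have h_radius : ∑ j ∈ Finset.univ.erase i, |(A + B) i j| ≤
      ∑ j ∈ Finset.univ.erase i, |A i j| + ∑ j ∈ Finset.univ.erase i, |B i j| := by
    rw [← Finset.sum_add_distrib]
    exact Finset.sum_le_sum fun j _ => abs_add_le (A i j) (B i j)
  calc gershgorinMargin A i - ∑ j, |B i j|
      = (A i i + -|B i i|) -
          (∑ j ∈ Finset.univ.erase i, |A i j| + ∑ j ∈ Finset.univ.erase i, |B i j|) := by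
        rw [gershgorinMargin, ← Finset.add_sum_erase _ _ (Finset.mem_univ i)]
        abel
    _ ≤ gershgorinMargin (A + B) i :=
        sub_le_sub (add_le_add_right (neg_abs_le (B i i)) (A i i)) h_radius

theorem gershgorinMargin_sub_sum_abs_le_sub (A B : Matrix n n R) (i : n) :
    gershgorinMargin A i - ∑ j, |B i j| ≤ gershgorinMargin (A - B) i := by
  simpa only [Matrix.neg_apply, abs_neg, ← sub_eq_add_neg] using
    gershgorinMargin_sub_sum_abs_le_add A (-B) i

theorem le_gershgorinMargin_fromBlocks_add_sub {A B C : Matrix n n R} {μ β γ : R}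
    (hA : ∀ i, μ ≤ gershgorinMargin A i) (hB : ∀ i, ∑ j, |B i j| ≤ β)
    (hC : ∀ i, ∑ j, |C i j| ≤ γ) (i : n ⊕ n) :
    μ - β - γ ≤ gershgorinMargin (fromBlocks (A + B) C C (A - B)) i := by
  rcases i with i | i
  · rw [gershgorinMargin_fromBlocks_inl]
    exact sub_le_sub ((sub_le_sub (hA i) (hB i)).trans
      (gershgorinMargin_sub_sum_abs_le_add A B i)) (hC i)
  · rw [gershgorinMargin_fromBlocks_inr]
    exact sub_le_sub ((sub_le_sub (hA i) (hB i)).trans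
      (gershgorinMargin_sub_sum_abs_le_sub A B i)) (hC i)

end GershgorinMargin

theorem sum_abs_smul_apply {R m n : Type*} [Ring R] [LinearOrder R] [IsOrderedRing R] [Fintype n]
    (r : R) (A : Matrix m n R) (i : m) : ∑ j, |(r • A) i j| = |r| * ∑ j, |A i j| := by
  simp only [Matrix.smul_apply, smul_eq_mul, abs_mul, Finset.mul_sum]

theorem a_pos (N : ℕ) : 0 < a N := by
  unfold a
  positivity

theorem a_le_one (N : ℕ) : a N ≤ 1 :=
  pow_le_one₀ (by norm_num) (by norm_num)

theorem c_pos (N : ℕ) : 0 < c N := by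
  unfold c
  positivity

theorem abs_b (N : ℕ) : |b N| = a N := by
  rw [b, a, abs_pow, abs_inv, abs_neg, abs_two]

theorem b_sq (N : ℕ) : b N ^ 2 = a N ^ 2 := by
  rw [← sq_abs, abs_b]

theorem a_sq_le_a (N : ℕ) : a N ^ 2 ≤ a N :=
  pow_le_of_le_one (a_pos N).le (a_le_one N) two_ne_zero

theorem abs_a_mul_b_sub_a_le (N : ℕ) : |a N * b N - a N| ≤ 2 * a N :=
  calc |a N * b N - a N| ≤ |a N * b N| + |a N| := abs_sub _ _
    _ = a N ^ 2 + a N := by rw [abs_mul, abs_b, abs_of_pos (a_pos N), sq]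
    _ ≤ 2 * a N := by linarith [a_sq_le_a N]

theorem abs_b_sub_a_sq_le (N : ℕ) : |b N - a N ^ 2| ≤ 2 * a N :=
  calc |b N - a N ^ 2| ≤ |b N| + |a N ^ 2| := abs_sub _ _
    _ = a N + a N ^ 2 := by rw [abs_b, abs_sq]
    _ ≤ 2 * a N := by linarith [a_sq_le_a N]

theorem abs_one_sub_a_sq_le_one (N : ℕ) : |1 - a N ^ 2| ≤ 1 := by
  rw [abs_le]
  constructor <;> linarith [a_sq_le_a N, a_le_one N, sq_nonneg (a N)]

theorem gershgorinMargin_M1 (N : ℕ) (i : Fin 3) : gershgorinMargin (M1 N) i = 1 - 2 * a N := by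
  fin_cases i <;>
    simp [gershgorinMargin_eq_add_sub_sum, Fin.sum_univ_three, M1, abs_b, abs_of_pos (a_pos N)] <;>
    ring

theorem Mz_eq_smul (N : ℕ) :
    Mz N = c N • !![-2 * (1 - a N ^ 2), a N * b N - a N, a N * b N - a N;
      a N * b N - a N, 1 - a N ^ 2, 2 * (b N - a N ^ 2);
      a N * b N - a N, 2 * (b N - a N ^ 2), 1 - a N ^ 2] := by
  rw [Mz]
  congr 1
  ext i j
  fin_cases i <;> fin_cases j <;> simp [δ1, δ2, δ3, b_sq] <;> ring

theorem Mx_eq_smul (N : ℕ) :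
    Mx N = (√3 * c N) • !![0, a N * b N - a N, -(a N * b N - a N);
      a N * b N - a N, -(1 - a N ^ 2), 0;
      -(a N * b N - a N), 0, 1 - a N ^ 2] := by
  rw [Mx]
  congr 1
  ext i j
  fin_cases i <;> fin_cases j <;> simp [δ2, δ3, b_sq]
  ring

theorem sum_abs_Mz_le (N : ℕ) (i : Fin 3) : ∑ j, |Mz N i j| ≤ c N * (2 + 6 * a N) := by
  rw [Mz_eq_smul, sum_abs_smul_apply, abs_of_pos (c_pos N)]
  refine mul_le_mul_of_nonneg_left ?_ (c_pos N).le
  fin_cases i <;>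
    simp [Fin.sum_univ_three, abs_mul] <;>
    linarith [a_pos N, abs_a_mul_b_sub_a_le N, abs_b_sub_a_sq_le N, abs_one_sub_a_sq_le_one N]

theorem sum_abs_Mx_le (N : ℕ) (i : Fin 3) : ∑ j, |Mx N i j| ≤ √3 * c N * (1 + 4 * a N) := by
  have h_scalar : 0 ≤ √3 * c N := mul_nonneg (Real.sqrt_nonneg 3) (c_pos N).le
  rw [Mx_eq_smul, sum_abs_smul_apply, abs_of_nonneg h_scalar]
  refine mul_le_mul_of_nonneg_left ?_ h_scalar
  fin_cases i <;>
    simp [Fin.sum_univ_three, -neg_sub] <;>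
    linarith [a_pos N, abs_a_mul_b_sub_a_le N, abs_one_sub_a_sq_le_one N]

theorem T_zero (N : ℕ) : T N 0 = fromBlocks (M1 N + Mz N) (Mx N) (Mx N) (M1 N - Mz N) := by
  have hS : S 0 = 0 := by
    ext i j
    fin_cases i <;> fin_cases j <;> simp [S]
  rw [T, hS, add_zero, sub_zero]

theorem f_eq (N : ℕ) :
    f N = 1 - (2 * a N + c N * (2 + √3) + c N * a N * (12 + 6 * √3)) := by
  have h_two : (2 : ℝ) ^ ((1 : ℤ) - (N : ℤ)) = 2 * a N := by
    rw [zpow_sub₀ two_ne_zero, zpow_one, zpow_natCast, a, inv_pow, div_eq_mul_inv]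
  have h_third : (1 / 3 : ℝ) ^ N = c N * a N := by
    rw [c, a, ← mul_pow]
    norm_num
  rw [f, h_two, h_third, c]

theorem f_lt (N : ℕ) :
    f N < 1 - 2 * a N - c N * (2 + 6 * a N) - √3 * c N * (1 + 4 * a N) := by
  have h_slack : 0 < c N * a N * (6 + 2 * √3) :=
    mul_pos (mul_pos (c_pos N) (a_pos N)) (by positivity)
  rw [f_eq]
  linarith

theorem stmt_6_general (N : ℕ) (i : Fin 3 ⊕ Fin 3) :
    f N < T N 0 i i - ∑ j ∈ Finset.univ.erase i, |T N 0 i j| := by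
  refine (f_lt N).trans_le ?_
  change _ ≤ gershgorinMargin (T N 0) i
  rw [T_zero]
  exact le_gershgorinMargin_fromBlocks_add_sub (fun k => (gershgorinMargin_M1 N k).ge)
    (sum_abs_Mz_le N) (sum_abs_Mx_le N) i

theorem stmt_6 (N : ℕ) (hN : 6 ≤ N) (i : Fin 3 ⊕ Fin 3) :
    f N < T N 0 i i - ∑ j ∈ Finset.univ.erase i, |T N 0 i j| :=
  stmt_6_general N i
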